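/- The average differential entropy satisfies h(X|W) = (n/2)·ln(2πσ²) − (μ/q)^{n/2}·(2π)^{−qn/2}·∫_{(ℝⁿ)^q} exp(−(1/2)Σ_{i,j=1}^q M_{ij} z_i·z_j) · ln[(1/q)Σ_{l=1}^q exp(−(μ/2)‖z_l‖²)] dz_1⋯dz_q. -/

import Mathlib

open MeasureTheory Real Finset

/-!
The mixture density `f(x|w)` depends on `(x, w)` only through the differences `y_j = x - w_j`.
Substituting `w_j = x - y_j` and integrating out `x` first turns the prior on `w` into the overlap
integral `∫ ∏_j φ(x - y_j) dx`, which by completing the square is a Gaussian in the scatter of `y`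
about its mean. Both this weight and the logarithm of the mixture are symmetric in the indices, so
the mean over components in front of the logarithm may be replaced by the last component alone,
which contributes the term `μ‖z_q‖²` to the quadratic form `M` after rescaling `y = s z`.
-/

open scoped BigOperators

section Shear

variable {X G : Type*} [MeasurableSpace X] {ρ : Measure X} [SFinite ρ]
  [AddCommGroup G] [MeasurableSpace G] [MeasurableAdd₂ G] [MeasurableNeg G]
  {ν : Measure G} [SFinite ν]
  {c : X → G} {p g : G → ℝ}

lemma measurePreserving_shear_sub [ν.IsAddLeftInvariant] [ν.IsNegInvariant]
    (hc : Measurable c) :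
    MeasurePreserving (fun z : X × G => (z.1, c z.1 - z.2)) (ρ.prod ν) (ρ.prod ν) :=
  (MeasurePreserving.id ρ).skew_product (g := fun x w => c x - w) (by fun_prop)
    (Filter.Eventually.of_forall fun x => (Measure.measurePreserving_sub_left ν (c x)).map_eq)

lemma integrable_comp_sub_mul_of_integrable_integral_mul (hc : Measurable c) (hp : Measurable p)
    (hp_nonneg : ∀ w, 0 ≤ p w) (hpc : ∀ y, Integrable (fun x => p (c x - y)) ρ)
    (hg : AEStronglyMeasurable g ν)
    (hpg : Integrable (fun y => (∫ x, p (c x - y) ∂ρ) * g y) ν) :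
    Integrable (fun z : X × G => p (c z.1 - z.2) * g z.2) (ρ.prod ν) := by
  have hp_meas : Measurable fun z : X × G => p (c z.1 - z.2) := by fun_prop
  refine (integrable_prod_iff' (hp_meas.aestronglyMeasurable.mul hg.comp_snd)).2
    ⟨Filter.Eventually.of_forall fun y => (hpc y).mul_const (g y), hpg.norm.congr ?_⟩
  refine Filter.Eventually.of_forall fun y => ?_
  simp only [Pi.mul_apply, norm_mul, integral_mul_const, norm_of_nonneg (hp_nonneg _),
    norm_of_nonneg (integral_nonneg fun x => hp_nonneg (c x - y))]

lemma integral_mul_integral_comp_sub [ν.IsAddLeftInvariant] [ν.IsNegInvariant]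
    (hc : Measurable c)
    (hint : Integrable (fun z : X × G => p (c z.1 - z.2) * g z.2) (ρ.prod ν)) :
    ∫ w, p w * ∫ x, g (c x - w) ∂ρ ∂ν = ∫ y, (∫ x, p (c x - y) ∂ρ) * g y ∂ν := by
  have hint_shear : Integrable (fun z : X × G => p z.2 * g (c z.1 - z.2)) (ρ.prod ν) := by
    simpa only [Function.comp_def, sub_sub_cancel] using
      (measurePreserving_shear_sub hc).integrable_comp_of_integrable hint
  calc ∫ w, p w * ∫ x, g (c x - w) ∂ρ ∂ν
      = ∫ w, ∫ x, p w * g (c x - w) ∂ρ ∂ν := by simp only [integral_const_mul]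
    _ = ∫ x, ∫ w, p w * g (c x - w) ∂ν ∂ρ := integral_integral_swap hint_shear.swap
    _ = ∫ x, ∫ y, p (c x - y) * g y ∂ν ∂ρ := by
        refine integral_congr_ae (Filter.Eventually.of_forall fun x => ?_)
        simpa only [sub_sub_cancel] using
          integral_sub_left_eq_self (fun y => p (c x - y) * g y) ν (c x)
    _ = ∫ y, ∫ x, p (c x - y) * g y ∂ρ ∂ν := integral_integral_swap hint
    _ = ∫ y, (∫ x, p (c x - y) ∂ρ) * g y ∂ν := by simp only [integral_mul_const]

end Shear

section Symmetrization

variable {ι E : Type*} [MeasurableSpace E]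

lemma coe_piCongrLeft_perm_symm (e : Equiv.Perm ι) :
    ⇑(MeasurableEquiv.piCongrLeft (fun _ : ι => E) e.symm) = fun y => y ∘ e := by
  funext y i
  simp [MeasurableEquiv.piCongrLeft, Equiv.piCongrLeft_apply]

variable [Fintype ι] {ν : Measure E} [SigmaFinite ν] {F : (ι → E) → ℝ} {g : E → ℝ} {k : ι}

lemma integrable_mul_comp_eval (hF : ∀ (e : Equiv.Perm ι) y, F (y ∘ e) = F y)
    (hFg : Integrable (fun y => F y * g (y k)) (Measure.pi fun _ => ν)) (j : ι) :
    Integrable (fun y => F y * g (y j)) (Measure.pi fun _ => ν) := by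
  classical
  have hswap := (measurePreserving_piCongrLeft (fun _ : ι => ν)
    (Equiv.swap j k).symm).integrable_comp_of_integrable hFg
  refine hswap.congr (Filter.Eventually.of_forall fun y => ?_)
  simp only [coe_piCongrLeft_perm_symm, Function.comp_apply, hF, Equiv.swap_apply_right]

lemma integral_mul_comp_eval (hF : ∀ (e : Equiv.Perm ι) y, F (y ∘ e) = F y) (j k : ι) :
    ∫ y, F y * g (y j) ∂(Measure.pi fun _ => ν) = ∫ y, F y * g (y k) ∂(Measure.pi fun _ => ν) := by
  classical
  rw [← (measurePreserving_piCongrLeft (fun _ : ι => ν) (Equiv.swap j k).symm).integral_comp'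
    (fun y => F y * g (y j))]
  simp only [coe_piCongrLeft_perm_symm, Function.comp_apply, hF, Equiv.swap_apply_left]

lemma integrable_mul_expect_comp_eval (hF : ∀ (e : Equiv.Perm ι) y, F (y ∘ e) = F y)
    (hFg : Integrable (fun y => F y * g (y k)) (Measure.pi fun _ => ν)) :
    Integrable (fun y => F y * 𝔼 j, g (y j)) (Measure.pi fun _ => ν) := by
  simp only [Finset.mul_expect]
  simp only [Fintype.expect_eq_sum_div_card]
  exact (integrable_finsetSum _ fun j _ => integrable_mul_comp_eval hF hFg j).div_const _

lemma integral_mul_expect_comp_eval (hF : ∀ (e : Equiv.Perm ι) y, F (y ∘ e) = F y)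
    (hFg : Integrable (fun y => F y * g (y k)) (Measure.pi fun _ => ν)) :
    ∫ y, F y * 𝔼 j, g (y j) ∂(Measure.pi fun _ => ν) =
      ∫ y, F y * g (y k) ∂(Measure.pi fun _ => ν) := by
  have : Nonempty ι := ⟨k⟩
  simp only [Finset.mul_expect]
  simp only [Fintype.expect_eq_sum_div_card]
  rw [integral_div, integral_finsetSum _ fun j _ => integrable_mul_comp_eval hF hFg j,
    ← Fintype.expect_eq_sum_div_card]
  simp only [integral_mul_comp_eval hF _ k, Fintype.expect_const]

end Symmetrization

section Gaussian

variable {ι κ : Type*} [Fintype ι] [Fintype κ] {v τ : ℝ}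

/-- The unnormalised centred Gaussian `exp (-τ ‖x‖² / 2)` of precision `τ` on `κ → ℝ`. The Euclidean
norm is spelled out because `κ → ℝ` carries the sup norm. -/
noncomputable def gaussianKernel (τ : ℝ) (x : κ → ℝ) : ℝ :=
  exp (-(τ / 2) * ∑ i, x i ^ 2)

/-- The density of the centred isotropic Gaussian of variance `v` per coordinate on `κ → ℝ`. -/
noncomputable def gaussianDensity (v : ℝ) (x : κ → ℝ) : ℝ :=
  (2 * π * v) ^ (-(Fintype.card κ : ℝ) / 2) * gaussianKernel v⁻¹ x

lemma gaussianDensity_eq (v : ℝ) (x : κ → ℝ) :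
    gaussianDensity v x =
      (2 * π * v) ^ (-(Fintype.card κ : ℝ) / 2) * exp (-(∑ i, x i ^ 2) / (2 * v)) := by
  rw [gaussianDensity, gaussianKernel]
  ring_nf

lemma gaussianKernel_pos (x : κ → ℝ) : 0 < gaussianKernel τ x := exp_pos _

lemma gaussianKernel_smul (s : ℝ) (x : κ → ℝ) :
    gaussianKernel τ (s • x) = gaussianKernel (s ^ 2 * τ) x := by
  simp only [gaussianKernel, Pi.smul_apply, smul_eq_mul, mul_pow, ← mul_sum]
  ring_nf

@[fun_prop]
lemma continuous_gaussianKernel : Continuous (gaussianKernel τ : (κ → ℝ) → ℝ) := by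
  unfold gaussianKernel
  fun_prop

@[fun_prop]
lemma continuous_gaussianDensity : Continuous (gaussianDensity v : (κ → ℝ) → ℝ) := by
  unfold gaussianDensity
  fun_prop

lemma gaussianDensity_nonneg (hv : 0 ≤ v) (x : κ → ℝ) : 0 ≤ gaussianDensity v x :=
  mul_nonneg (by positivity) (gaussianKernel_pos x).le

lemma gaussianDensity_eq_prod_gaussianPDFReal (hv : 0 ≤ v) (x : κ → ℝ) :
    gaussianDensity v x = ∏ i, ProbabilityTheory.gaussianPDFReal 0 v.toNNReal (x i) := by
  have hexp : gaussianKernel v⁻¹ x = ∏ i, exp (-(x i - 0) ^ 2 / (2 * v)) := by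
    rw [gaussianKernel, ← exp_sum, mul_sum]
    congr! 2 with i
    ring
  have hconst : (2 * π * v) ^ (-(Fintype.card κ : ℝ) / 2) = ∏ _i : κ, (√(2 * π * v))⁻¹ := by
    rw [prod_const, card_univ, sqrt_eq_rpow, ← rpow_neg (by positivity),
      ← rpow_mul_natCast (by positivity)]
    ring_nf
  simp only [gaussianDensity, ProbabilityTheory.gaussianPDFReal, coe_toNNReal v hv,
    prod_mul_distrib, hexp, hconst]

lemma integrable_gaussianDensity (hv : 0 ≤ v) :
    Integrable (gaussianDensity v : (κ → ℝ) → ℝ) := by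
  rw [funext (gaussianDensity_eq_prod_gaussianPDFReal hv)]
  exact .fintype_prod fun _ => ProbabilityTheory.integrable_gaussianPDFReal 0 _

lemma integral_gaussianDensity (hv : 0 < v) :
    ∫ x : κ → ℝ, gaussianDensity v x = 1 := by
  rw [funext (gaussianDensity_eq_prod_gaussianPDFReal hv.le), integral_fintype_prod_volume_eq_prod]
  simp only [ProbabilityTheory.integral_gaussianPDFReal_eq_one 0 (toNNReal_pos.2 hv).ne',
    prod_const_one]

lemma integral_gaussianDensity_sub (hv : 0 < v) (c : κ → ℝ) :
    ∫ x : κ → ℝ, gaussianDensity v (x - c) = 1 :=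
  (integral_sub_right_eq_self (gaussianDensity v) c).trans (integral_gaussianDensity hv)

/-- The scatter `∑ⱼ ‖yⱼ - ȳ‖² = ∑ⱼ ‖yⱼ‖² - ‖∑ⱼ yⱼ‖² / q` of `q` points about their mean `ȳ`. -/
noncomputable def scatter (y : ι → κ → ℝ) : ℝ :=
  ∑ j, ∑ i, y j i ^ 2 - (∑ i, (∑ j, y j i) ^ 2) / Fintype.card ι

/-- The marginal density of the differences `(x - wⱼ)ⱼ` at `y`, for independent centred Gaussian
`wⱼ` of variance `v` per coordinate, when `x` ranges over Lebesgue measure. -/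
noncomputable def gaussianOverlap (v : ℝ) (y : ι → κ → ℝ) : ℝ :=
  ∫ x : κ → ℝ, ∏ j, gaussianDensity v (x - y j)

lemma sum_sub_sq_eq_card_mul_sub_expect_sq [Nonempty ι] (a : ℝ) (b : ι → ℝ) :
    ∑ j, (a - b j) ^ 2 = Fintype.card ι * (a - 𝔼 j, b j) ^ 2 +
      (∑ j, b j ^ 2 - (∑ j, b j) ^ 2 / Fintype.card ι) := by
  simp only [sub_sq, sum_add_distrib, sum_sub_distrib, sum_const, card_univ, nsmul_eq_mul,
    ← mul_sum, Fintype.expect_eq_sum_div_card]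
  field_simp
  ring

lemma sum_sum_sub_sq_eq_card_mul_add_scatter [Nonempty ι] (x : κ → ℝ) (y : ι → κ → ℝ) :
    ∑ j, ∑ i, (x i - y j i) ^ 2 =
      Fintype.card ι * ∑ i, (x - 𝔼 j, y j) i ^ 2 + scatter y := by
  rw [sum_comm, scatter, sum_comm (f := fun j i => y j i ^ 2), mul_sum, sum_div, ← sum_sub_distrib,
    ← sum_add_distrib]
  refine sum_congr rfl fun i _ => ?_
  rw [sum_sub_sq_eq_card_mul_sub_expect_sq, Pi.sub_apply, Finset.expect_apply]

lemma prod_gaussianDensity_sub [Nonempty ι] (hv : 0 < v) (x : κ → ℝ) (y : ι → κ → ℝ) :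
    ∏ j, gaussianDensity v (x - y j) =
      (2 * π * v) ^ (-(Fintype.card ι * Fintype.card κ : ℝ) / 2) *
        (2 * π * v / Fintype.card ι) ^ ((Fintype.card κ : ℝ) / 2) *
        exp (-(1 / 2) * (v⁻¹ * scatter y)) *
        gaussianDensity (v / Fintype.card ι) (x - 𝔼 j, y j) := by
  have hprod : ((2 * π * v) ^ (-(Fintype.card κ : ℝ) / 2)) ^ Fintype.card ι =
      (2 * π * v) ^ (-(Fintype.card ι * Fintype.card κ : ℝ) / 2) := by
    rw [← rpow_mul_natCast (by positivity)]
    ring_nf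
  have hcancel : (2 * π * v / Fintype.card ι) ^ ((Fintype.card κ : ℝ) / 2) *
      (2 * π * (v / Fintype.card ι)) ^ (-(Fintype.card κ : ℝ) / 2) = 1 := by
    rw [← mul_div_assoc, ← rpow_add (by positivity), neg_div, add_neg_cancel, rpow_zero]
  have hexp : ∏ j, gaussianKernel v⁻¹ (x - y j) = exp (-(1 / 2) * (v⁻¹ * scatter y)) *
      gaussianKernel (v / Fintype.card ι)⁻¹ (x - 𝔼 j, y j) := by
    simp only [gaussianKernel, ← exp_sum, ← exp_add, ← mul_sum, Pi.sub_apply x (y _),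
      sum_sum_sub_sq_eq_card_mul_add_scatter, inv_div]
    ring_nf
  simp only [gaussianDensity, prod_mul_distrib, prod_const, card_univ, hprod, hexp]
  linear_combination -(2 * π * v) ^ (-(Fintype.card ι * Fintype.card κ : ℝ) / 2) *
    exp (-(1 / 2) * (v⁻¹ * scatter y)) *
    gaussianKernel (v / Fintype.card ι)⁻¹ (x - 𝔼 j, y j) * hcancel

lemma integrable_prod_gaussianDensity_sub [Nonempty ι] (hv : 0 < v) (y : ι → κ → ℝ) :
    Integrable fun x : κ → ℝ => ∏ j, gaussianDensity v (x - y j) := by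
  simp only [prod_gaussianDensity_sub hv]
  exact ((integrable_gaussianDensity (by positivity)).comp_sub_right _).const_mul _

lemma gaussianOverlap_eq [Nonempty ι] (hv : 0 < v) (y : ι → κ → ℝ) :
    gaussianOverlap v y =
      (2 * π * v) ^ (-(Fintype.card ι * Fintype.card κ : ℝ) / 2) *
        (2 * π * v / Fintype.card ι) ^ ((Fintype.card κ : ℝ) / 2) *
        exp (-(1 / 2) * (v⁻¹ * scatter y)) := by
  simp only [gaussianOverlap, prod_gaussianDensity_sub hv, integral_const_mul]
  rw [integral_gaussianDensity_sub (by positivity), mul_one]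

lemma gaussianOverlap_comp_perm (e : Equiv.Perm ι) (y : ι → κ → ℝ) :
    gaussianOverlap v (y ∘ e) = gaussianOverlap v y := by
  simp only [gaussianOverlap, Function.comp_apply,
    fun x : κ → ℝ => Equiv.prod_comp e fun j => gaussianDensity v (x - y j)]

end Gaussian

section Entropy

variable {ι κ : Type*} [Fintype ι] [Fintype κ] {v s : ℝ}

/-- The differential entropy, in nats, of a probability density on `X`. -/
noncomputable def differentialEntropy {X : Type*} [MeasureSpace X] (f : X → ℝ) : ℝ :=
  -∫ x, f x * log (f x)

/-- The density of the uniform mixture of the Gaussians of variance `v` centred at the `w j`. -/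
noncomputable def gaussianMixture (v : ℝ) (w : ι → κ → ℝ) (x : κ → ℝ) : ℝ :=
  𝔼 j, gaussianDensity v (x - w j)

/-- The logarithm of the mean over `j` of the Gaussian kernels of precision `τ` at `y j`: up to an
additive constant, the log-density of a Gaussian mixture in terms of the differences
`y j = x - w j`. -/
noncomputable def logMeanKernel (τ : ℝ) (y : ι → κ → ℝ) : ℝ :=
  log (𝔼 j, gaussianKernel τ (y j))

lemma gaussianMixture_eq (v : ℝ) (w : ι → κ → ℝ) (x : κ → ℝ) :
    gaussianMixture v w x = 1 / Fintype.card ι * ∑ j, (2 * π * v) ^ (-(Fintype.card κ : ℝ) / 2) *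
      exp (-(∑ i, (x i - w j i) ^ 2) / (2 * v)) := by
  simp only [gaussianMixture, Fintype.expect_eq_sum_div_card, one_div_mul_eq_div,
    gaussianDensity_eq, Pi.sub_apply]

lemma logMeanKernel_eq (τ : ℝ) (y : ι → κ → ℝ) :
    logMeanKernel τ y =
      log (1 / Fintype.card ι * ∑ j, exp (-(τ / 2) * ∑ i, y j i ^ 2)) := by
  simp only [logMeanKernel, gaussianKernel, Fintype.expect_eq_sum_div_card, one_div_mul_eq_div]

lemma integrable_gaussianMixture (hv : 0 ≤ v) (w : ι → κ → ℝ) :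
    Integrable (gaussianMixture v w) := by
  unfold gaussianMixture
  simp only [Fintype.expect_eq_sum_div_card]
  exact (integrable_finsetSum _ fun j _ =>
    (integrable_gaussianDensity hv).comp_sub_right (w j)).div_const _

lemma integral_gaussianMixture [Nonempty ι] (hv : 0 < v) (w : ι → κ → ℝ) :
    ∫ x, gaussianMixture v w x = 1 := by
  simp only [gaussianMixture, Fintype.expect_eq_sum_div_card]
  rw [integral_div, integral_finsetSum _ fun j _ =>
    (integrable_gaussianDensity hv.le).comp_sub_right (w j)]
  simp only [integral_gaussianDensity_sub hv, ← Fintype.expect_eq_sum_div_card,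
    Fintype.expect_const]

lemma expect_gaussianKernel_pos [Nonempty ι] (τ : ℝ) (y : ι → κ → ℝ) :
    0 < 𝔼 j, gaussianKernel τ (y j) :=
  expect_pos (fun _ _ => gaussianKernel_pos _) univ_nonempty

lemma log_gaussianMixture [Nonempty ι] (hv : 0 < v) (w : ι → κ → ℝ) (x : κ → ℝ) :
    log (gaussianMixture v w x) =
      logMeanKernel v⁻¹ (fun j => x - w j) - Fintype.card κ / 2 * log (2 * π * v) := by
  simp only [gaussianMixture, gaussianDensity, logMeanKernel, ← mul_expect]
  rw [log_mul (by positivity) (expect_gaussianKernel_pos ..).ne', log_rpow (by positivity)]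
  ring

lemma logMeanKernel_smul (τ s : ℝ) (y : ι → κ → ℝ) :
    logMeanKernel τ (s • y) = logMeanKernel (s ^ 2 * τ) y := by
  simp only [logMeanKernel, Pi.smul_apply, gaussianKernel_smul]

lemma logMeanKernel_comp_perm (τ : ℝ) (e : Equiv.Perm ι) (y : ι → κ → ℝ) :
    logMeanKernel τ (y ∘ e) = logMeanKernel τ y :=
  congrArg log (Fintype.expect_equiv e _ _ fun _ => rfl)

lemma measurable_logMeanKernel (τ : ℝ) : Measurable (logMeanKernel τ : (ι → κ → ℝ) → ℝ) := by
  unfold logMeanKernel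
  simp only [Fintype.expect_eq_sum_div_card]
  fun_prop

lemma differentialEntropy_gaussianMixture [Nonempty ι] (hv : 0 < v) (w : ι → κ → ℝ)
    (hint : Integrable fun x => gaussianMixture v w x * log (gaussianMixture v w x)) :
    differentialEntropy (gaussianMixture v w) = Fintype.card κ / 2 * log (2 * π * v) -
      ∫ x, gaussianMixture v w x * logMeanKernel v⁻¹ (fun j => x - w j) := by
  have hsplit : ∀ x, gaussianMixture v w x * logMeanKernel v⁻¹ (fun j => x - w j) =
      gaussianMixture v w x * log (gaussianMixture v w x) +
        Fintype.card κ / 2 * log (2 * π * v) * gaussianMixture v w x := fun x => by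
    rw [log_gaussianMixture hv]
    ring
  simp only [hsplit]
  rw [integral_add hint ((integrable_gaussianMixture hv.le w).const_mul _), integral_const_mul,
    integral_gaussianMixture hv, differentialEntropy]
  ring

lemma integrable_prod_gaussianDensity (hs : 0 ≤ s) :
    Integrable fun w : ι → κ → ℝ => ∏ j, gaussianDensity s (w j) :=
  .fintype_prod fun _ => integrable_gaussianDensity hs

lemma integral_prod_gaussianDensity (hs : 0 < s) :
    ∫ w : ι → κ → ℝ, ∏ j, gaussianDensity s (w j) = 1 := by
  rw [integral_fintype_prod_volume_eq_pow, integral_gaussianDensity hs, one_pow]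

lemma integral_mul_differentialEntropy_gaussianMixture [Nonempty ι] (hv : 0 < v) (hs : 0 < s)
    (hmix : ∀ w : ι → κ → ℝ,
      Integrable fun x => gaussianMixture v w x * log (gaussianMixture v w x))
    (hent : Integrable fun w : ι → κ → ℝ =>
      (∏ j, gaussianDensity s (w j)) * differentialEntropy (gaussianMixture v w)) :
    ∫ w : ι → κ → ℝ, (∏ j, gaussianDensity s (w j)) * differentialEntropy (gaussianMixture v w) =
      Fintype.card κ / 2 * log (2 * π * v) - ∫ w : ι → κ → ℝ, (∏ j, gaussianDensity s (w j)) *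
        ∫ x, gaussianMixture v w x * logMeanKernel v⁻¹ (fun j => x - w j) := by
  have hconst := (integrable_prod_gaussianDensity (ι := ι) (κ := κ) hs.le).mul_const
    (Fintype.card κ / 2 * log (2 * π * v))
  have hcross : ∀ w : ι → κ → ℝ, (∏ j, gaussianDensity s (w j)) *
        ∫ x, gaussianMixture v w x * logMeanKernel v⁻¹ (fun j => x - w j) =
      (∏ j, gaussianDensity s (w j)) * (Fintype.card κ / 2 * log (2 * π * v)) -
        (∏ j, gaussianDensity s (w j)) * differentialEntropy (gaussianMixture v w) := fun w => by
    rw [differentialEntropy_gaussianMixture hv w (hmix w)]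
    ring
  simp only [hcross]
  rw [integral_sub hconst hent, integral_mul_const, integral_prod_gaussianDensity hs]
  ring

lemma integral_mul_integral_comp_sub_eq_integral_gaussianOverlap_mul [Nonempty ι] (hs : 0 < s)
    {g : (ι → κ → ℝ) → ℝ} (hg : Measurable g)
    (hint : Integrable fun y => gaussianOverlap s y * g y) :
    ∫ w : ι → κ → ℝ, (∏ j, gaussianDensity s (w j)) * ∫ x, g (fun j => x - w j) =
      ∫ y, gaussianOverlap s y * g y := by
  have hjoint := integrable_comp_sub_mul_of_integrable_integral_mul (ρ := volume) (ν := volume)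
    (c := Function.const ι) (p := fun w : ι → κ → ℝ => ∏ j, gaussianDensity s (w j)) (g := g)
    (by fun_prop) (by fun_prop)
    (fun w => prod_nonneg fun j _ => gaussianDensity_nonneg hs.le (w j))
    (integrable_prod_gaussianDensity_sub hs) hg.aestronglyMeasurable hint
  exact integral_mul_integral_comp_sub (by fun_prop) hjoint

lemma integral_mul_integral_gaussianMixture_mul_logMeanKernel (hs : 0 < s) (k : ι)
    (hint : Integrable fun y : ι → κ → ℝ =>
      gaussianOverlap s y * logMeanKernel v⁻¹ y * gaussianDensity v (y k)) :
    ∫ w : ι → κ → ℝ, (∏ j, gaussianDensity s (w j)) *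
        ∫ x, gaussianMixture v w x * logMeanKernel v⁻¹ (fun j => x - w j) =
      ∫ y : ι → κ → ℝ, gaussianOverlap s y * logMeanKernel v⁻¹ y * gaussianDensity v (y k) := by
  have : Nonempty ι := ⟨k⟩
  have hsymm : ∀ (e : Equiv.Perm ι) (y : ι → κ → ℝ),
      gaussianOverlap s (y ∘ e) * logMeanKernel v⁻¹ (y ∘ e) =
        gaussianOverlap s y * logMeanKernel v⁻¹ y := fun e y => by
    rw [gaussianOverlap_comp_perm, logMeanKernel_comp_perm]
  have hassoc : ∀ y : ι → κ → ℝ,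
      gaussianOverlap s y * logMeanKernel v⁻¹ y * 𝔼 j, gaussianDensity v (y j) =
        gaussianOverlap s y * ((𝔼 j, gaussianDensity v (y j)) * logMeanKernel v⁻¹ y) :=
    fun y => by ring
  have hmeas : Measurable fun y : ι → κ → ℝ =>
      (𝔼 j, gaussianDensity v (y j)) * logMeanKernel v⁻¹ y := by
    simp only [Fintype.expect_eq_sum_div_card]
    exact .mul (by fun_prop) (measurable_logMeanKernel _)
  have hmean := integrable_mul_expect_comp_eval hsymm hint
  have hsymmetrize := integral_mul_expect_comp_eval hsymm hint
  simp only [hassoc] at hmean hsymmetrize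
  exact (integral_mul_integral_comp_sub_eq_integral_gaussianOverlap_mul hs hmeas hmean).trans
    hsymmetrize

end Entropy

section Scaling

variable {ι κ : Type*} [Fintype ι] [Fintype κ] {v s : ℝ}

lemma integral_eq_pow_mul_integral_comp_smul (hs : 0 < s) (F : (ι → κ → ℝ) → ℝ) :
    ∫ y, F y = s ^ (Fintype.card ι * Fintype.card κ) * ∫ z, F (s • z) := by
  have hfinrank : Module.finrank ℝ (ι → κ → ℝ) = Fintype.card ι * Fintype.card κ := by
    simp [Module.finrank_pi_fintype]
  rw [Measure.integral_comp_smul, hfinrank, abs_of_pos (by positivity), smul_eq_mul,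
    mul_inv_cancel_left₀ (by positivity)]

lemma scatter_smul (s : ℝ) (y : ι → κ → ℝ) : scatter (s • y) = s ^ 2 * scatter y := by
  simp only [scatter, Pi.smul_apply, smul_eq_mul, mul_pow, ← mul_sum]
  ring

lemma gaussianOverlap_sq_smul [Nonempty ι] (hs : 0 < s) (z : ι → κ → ℝ) :
    s ^ (Fintype.card ι * Fintype.card κ) * gaussianOverlap (s ^ 2) (s • z) =
      (2 * π) ^ (-(Fintype.card ι * Fintype.card κ : ℝ) / 2) *
        (2 * π * s ^ 2 / Fintype.card ι) ^ ((Fintype.card κ : ℝ) / 2) *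
        exp (-(1 / 2) * scatter z) := by
  have hpow : s ^ (Fintype.card ι * Fintype.card κ) *
      (s ^ 2) ^ (-(Fintype.card ι * Fintype.card κ : ℝ) / 2) = 1 := by
    rw [← rpow_natCast s 2, ← rpow_mul hs.le, ← rpow_natCast, ← rpow_add hs]
    push_cast
    ring_nf
    exact rpow_zero s
  rw [gaussianOverlap_eq (by positivity), scatter_smul, inv_mul_cancel_left₀ (by positivity),
    mul_rpow (by positivity) (by positivity)]
  linear_combination (2 * π) ^ (-(Fintype.card ι * Fintype.card κ : ℝ) / 2) *
    (2 * π * s ^ 2 / Fintype.card ι) ^ ((Fintype.card κ : ℝ) / 2) *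
    exp (-(1 / 2) * scatter z) * hpow

lemma gaussianOverlap_sq_smul_mul_gaussianDensity_smul [Nonempty ι] (hv : 0 < v) (hs : 0 < s)
    (k : ι) (z : ι → κ → ℝ) :
    s ^ (Fintype.card ι * Fintype.card κ) *
        (gaussianOverlap (s ^ 2) (s • z) * gaussianDensity v (s • z k)) =
      (s ^ 2 / v / Fintype.card ι) ^ ((Fintype.card κ : ℝ) / 2) *
        (2 * π) ^ (-(Fintype.card ι * Fintype.card κ : ℝ) / 2) *
        exp (-(1 / 2) * (scatter z + s ^ 2 / v * ∑ i, z k i ^ 2)) := by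
  have hconst : (2 * π * s ^ 2 / Fintype.card ι) ^ ((Fintype.card κ : ℝ) / 2) *
      (2 * π * v) ^ (-(Fintype.card κ : ℝ) / 2) =
      (s ^ 2 / v / Fintype.card ι) ^ ((Fintype.card κ : ℝ) / 2) := by
    rw [neg_div, rpow_neg (by positivity), ← div_eq_mul_inv, ← div_rpow (by positivity)
      (by positivity)]
    congr 1
    field_simp
  have hexp : exp (-(1 / 2) * scatter z) * gaussianKernel (s ^ 2 * v⁻¹) (z k) =
      exp (-(1 / 2) * (scatter z + s ^ 2 / v * ∑ i, z k i ^ 2)) := by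
    rw [gaussianKernel, ← exp_add]
    ring_nf
  rw [← mul_assoc, gaussianOverlap_sq_smul hs, gaussianDensity, gaussianKernel_smul, ← hconst,
    ← hexp]
  ring

lemma gaussianOverlap_mul_logMeanKernel_smul [Nonempty ι] (hv : 0 < v) (hs : 0 < s) (k : ι)
    (z : ι → κ → ℝ) :
    s ^ (Fintype.card ι * Fintype.card κ) * (gaussianOverlap (s ^ 2) (s • z) *
        logMeanKernel v⁻¹ (s • z) * gaussianDensity v ((s • z) k)) =
      (s ^ 2 / v / Fintype.card ι) ^ ((Fintype.card κ : ℝ) / 2) *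
        (2 * π) ^ (-(Fintype.card ι * Fintype.card κ : ℝ) / 2) *
        (exp (-(1 / 2) * (scatter z + s ^ 2 / v * ∑ i, z k i ^ 2)) *
          logMeanKernel (s ^ 2 / v) z) := by
  rw [Pi.smul_apply, logMeanKernel_smul, ← div_eq_mul_inv]
  linear_combination logMeanKernel (s ^ 2 / v) z *
    gaussianOverlap_sq_smul_mul_gaussianDensity_smul hv hs k z

lemma integrable_gaussianOverlap_mul_logMeanKernel (hv : 0 < v) (hs : 0 < s) {k : ι}
    (hint : Integrable fun z : ι → κ → ℝ =>
      exp (-(1 / 2) * (scatter z + s ^ 2 / v * ∑ i, z k i ^ 2)) * logMeanKernel (s ^ 2 / v) z) :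
    Integrable fun y : ι → κ → ℝ =>
      gaussianOverlap (s ^ 2) y * logMeanKernel v⁻¹ y * gaussianDensity v (y k) := by
  have : Nonempty ι := ⟨k⟩
  have hpow : IsUnit (s ^ (Fintype.card ι * Fintype.card κ)) := (pow_pos hs _).ne'.isUnit
  rw [← integrable_comp_smul_iff volume _ hs.ne', ← integrable_const_mul_iff hpow]
  simp only [gaussianOverlap_mul_logMeanKernel_smul hv hs]
  exact hint.const_mul _

lemma integral_gaussianOverlap_mul_logMeanKernel (hv : 0 < v) (hs : 0 < s) (k : ι) :
    ∫ y : ι → κ → ℝ, gaussianOverlap (s ^ 2) y * logMeanKernel v⁻¹ y * gaussianDensity v (y k) =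
      (s ^ 2 / v / Fintype.card ι) ^ ((Fintype.card κ : ℝ) / 2) *
        (2 * π) ^ (-(Fintype.card ι * Fintype.card κ : ℝ) / 2) *
        ∫ z : ι → κ → ℝ, exp (-(1 / 2) * (scatter z + s ^ 2 / v * ∑ i, z k i ^ 2)) *
          logMeanKernel (s ^ 2 / v) z := by
  have : Nonempty ι := ⟨k⟩
  rw [integral_eq_pow_mul_integral_comp_smul hs, ← integral_const_mul, ← integral_const_mul]
  simp only [gaussianOverlap_mul_logMeanKernel_smul hv hs]

lemma sum_mul_sum_mul_eq_scatter_add [DecidableEq ι] (μ : ℝ) (k : ι) (z : ι → κ → ℝ) :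
    ∑ a, ∑ b, ((if a = b then (1 : ℝ) else 0) - 1 / Fintype.card ι +
        μ * (if a = k then 1 else 0) * (if b = k then 1 else 0)) * ∑ i, z a i * z b i =
      scatter z + μ * ∑ i, z k i ^ 2 := by
  have hsum_sq : ∑ a, ∑ b, ∑ i, z a i * z b i = ∑ i, (∑ a, z a i) ^ 2 := by
    simp only [sq, sum_mul_sum]
    rw [sum_comm (γ := κ)]
    exact sum_congr rfl fun a _ => sum_comm
  simp only [add_mul, sub_mul, sum_add_distrib, sum_sub_distrib]
  simp only [mul_assoc, ite_mul, one_mul, zero_mul, mul_ite, mul_zero, ← mul_sum, hsum_sq]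
  simp [scatter, sq, div_eq_inv_mul]

end Scaling

/-- Corollary 1 of the paper.
The average differential entropy equals
`(n/2)·ln(2πσ²) − (μ/q)^{n/2} (2π)^{−qn/2} ∫ exp(−½ ẑᵀ M ẑ) ln[(1/q)Σ_l exp(−μ‖z_l‖²/2)] dz`,
where `M_{ij} = δ_{ij} − 1/q + μ δ_{iq} δ_{jq}`. -/
theorem average_entropy_compact_form
    (q n : ℕ) (hq : 2 ≤ q) (hn : 1 ≤ n)
    (σ s : ℝ) (hσ : 0 < σ) (hs : 0 < s)
    (μ : ℝ) (hμ : μ = s ^ 2 / σ ^ 2)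
    (M : Matrix (Fin q) (Fin q) ℝ)
    (hM : ∀ i j : Fin q, M i j = (if i = j then (1 : ℝ) else 0) - 1 / (q : ℝ)
      + μ * (if (i : ℕ) + 1 = q then 1 else 0) * (if (j : ℕ) + 1 = q then 1 else 0))
    -- the Gaussian mixture density `f(x|w)`
    (f : (Fin q → Fin n → ℝ) → (Fin n → ℝ) → ℝ)
    (hf : ∀ w x, f w x =
      (1 / (q : ℝ)) * ∑ j : Fin q, (2 * π * σ ^ 2) ^ (-(n : ℝ) / 2) *
        Real.exp (-(∑ i, (x i - w j i) ^ 2) / (2 * σ ^ 2)))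
    -- the conditional differential entropy `h(X | W = w)`
    (hEnt : (Fin q → Fin n → ℝ) → ℝ)
    (hhEnt : ∀ w, hEnt w = -∫ x : Fin n → ℝ, f w x * Real.log (f w x))
    (hInt1 : ∀ w, Integrable (fun x : Fin n → ℝ => f w x * Real.log (f w x)))
    -- the average differential entropy `h(X|W)`
    (H : ℝ)
    (hH : H = ∫ w : Fin q → Fin n → ℝ,
      (∏ j : Fin q, (2 * π * s ^ 2) ^ (-(n : ℝ) / 2) *
        Real.exp (-(∑ i, w j i ^ 2) / (2 * s ^ 2))) * hEnt w)
    (hInt2 : Integrable (fun w : Fin q → Fin n → ℝ =>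
      (∏ j : Fin q, (2 * π * s ^ 2) ^ (-(n : ℝ) / 2) *
        Real.exp (-(∑ i, w j i ^ 2) / (2 * s ^ 2))) * hEnt w))
    (hInt3 : Integrable (fun z : Fin q → Fin n → ℝ =>
      Real.exp (-(1 / 2) * ∑ a : Fin q, ∑ b : Fin q, M a b * ∑ i, z a i * z b i) *
        Real.log ((1 / (q : ℝ)) * ∑ l : Fin q,
          Real.exp (-(μ / 2) * ∑ i, z l i ^ 2)))) :
    H = ((n : ℝ) / 2) * Real.log (2 * π * σ ^ 2)
      - (μ / (q : ℝ)) ^ ((n : ℝ) / 2) * (2 * π) ^ (-((q : ℝ) * (n : ℝ)) / 2) *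
        ∫ z : Fin q → Fin n → ℝ,
          Real.exp (-(1 / 2) * ∑ a : Fin q, ∑ b : Fin q, M a b * ∑ i, z a i * z b i) *
            Real.log ((1 / (q : ℝ)) * ∑ l : Fin q,
              Real.exp (-(μ / 2) * ∑ i, z l i ^ 2)) := by
  obtain ⟨k, hk⟩ : ∃ k : Fin q, ∀ a : Fin q, (a : ℕ) + 1 = q ↔ a = k :=
    ⟨⟨q - 1, by omega⟩, fun a => by rw [Fin.ext_iff]; dsimp only; omega⟩
  have : Nonempty (Fin q) := ⟨k⟩
  have hσ2 : 0 < σ ^ 2 := by positivity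
  have hs2 : 0 < s ^ 2 := by positivity
  have hmixture : f = gaussianMixture (σ ^ 2) := by
    funext w x
    simp only [hf, gaussianMixture_eq, Fintype.card_fin]
  have hentropy : hEnt = fun w => differentialEntropy (gaussianMixture (σ ^ 2) w) := by
    simp only [funext hhEnt, hmixture, differentialEntropy]
  have hquad (z : Fin q → Fin n → ℝ) : ∑ a, ∑ b, M a b * ∑ i, z a i * z b i =
      scatter z + s ^ 2 / σ ^ 2 * ∑ i, z k i ^ 2 := by
    simpa only [hM, hμ, hk, Fintype.card_fin] using
      sum_mul_sum_mul_eq_scatter_add (s ^ 2 / σ ^ 2) k z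
  have hform := integral_mul_differentialEntropy_gaussianMixture hσ2 hs2 (hmixture ▸ hInt1)
    (by simpa only [gaussianDensity_eq, Fintype.card_fin, hentropy] using hInt2)
  rw [integral_mul_integral_gaussianMixture_mul_logMeanKernel hs2 k
      (integrable_gaussianOverlap_mul_logMeanKernel hσ2 hs
        (by simpa only [logMeanKernel_eq, Fintype.card_fin, hquad, hμ] using hInt3)),
    integral_gaussianOverlap_mul_logMeanKernel hσ2 hs k] at hform
  simpa only [hH, hquad, hμ, hentropy, gaussianDensity_eq, logMeanKernel_eq, Fintype.card_fin]
    using hform
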